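/- arXiv:2410.10593 — 3 statements merged into one kernel-verified Lean document; each statement's English description precedes it below -/
import Mathlib

section
/- Fix a Young diagram λ with n cells and a natural number m. For a filling T of λ with entries in {1,…,m}, define the Young operator Y(T) in the polynomial ring ℂ[X_{(r,s)} : r ∈ ℕ, s ∈ {1,…,m}] as the product over the columns of T of the Slater operators of the entries of each column (the column of length k contributing S(T_{1,c},…,T_{k,c})). Then the family {Y(T) : T a semistandard Young tableau of shape λ with entries in {1,…,m}} is linearly independent over ℂ. -/
open scoped BigOperators

/-- The Slater operator `S(i₁,…,i_k)`: the determinant of the `k × k` matrix whose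
`(r,c)` entry is the commuting variable `X (r, i c)`. -/
noncomputable def slaterOp {k : ℕ} (i : Fin k → ℕ) : MvPolynomial (ℕ × ℕ) ℂ :=
  (Matrix.of fun r c : Fin k => MvPolynomial.X ((r : ℕ), i c)).det

/-- The Young operator `Y(T)` of a filling `T` of the Young diagram `μ`: the product over
the columns of `μ` of the Slater operators of the entries of each column. -/
noncomputable def youngOp (μ : YoungDiagram) (T : ℕ → ℕ → ℕ) : MvPolynomial (ℕ × ℕ) ℂ :=
  ∏ c ∈ Finset.range (μ.rowLen 0), slaterOp (fun r : Fin (μ.colLen c) => T (r : ℕ) c)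

/-!
Give the variable `X (r, x)` the weight `r * x`. By the strict rearrangement inequality, the
diagonal term of the Slater operator of a strictly increasing column is its unique term of largest
weight, so the product of the diagonal terms is the unique monomial of largest weight in `Y(T)`.
Its exponents count how often each entry occurs in each row of `T`, which determines the weakly
increasing rows. Polynomials with distinct leading monomials are linearly independent: look at the
coefficient of a leading monomial of maximal weight in a vanishing linear combination.
-/

theorem eq_of_monotone_of_card_fiber_eq {α : Type*} [PartialOrder α] [DecidableEq α] {n : ℕ}
    {f g : Fin n → α} (hf : Monotone f) (hg : Monotone g)
    (h : ∀ x, Finset.card {c | f c = x} = Finset.card {c | g c = x}) : f = g := by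
  have perm : (List.ofFn f).Perm (List.ofFn g) := by
    rw [List.perm_iff_count]
    intro x
    have count_ofFn (k : Fin n → α) : (List.ofFn k).count x = Finset.card {c | k c = x} := by
      simp only [← Multiset.coe_count, List.ofFn_eq_map, ← Multiset.map_coe, Multiset.count_map,
        eq_comm]
      rfl
    rw [count_ofFn, count_ofFn, h]
  exact List.ofFn_injective
    (perm.eq_of_pairwise' hf.sortedLE_ofFn.pairwise hg.sortedLE_ofFn.pairwise)

theorem sum_range_rowLen_sum_fin_colLen {M : Type*} [AddCommMonoid M] (μ : YoungDiagram)
    (f : ℕ × ℕ → M) :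
    ∑ c ∈ Finset.range (μ.rowLen 0), ∑ r : Fin (μ.colLen c), f (r, c) = ∑ x ∈ μ.cells, f x := by
  have snd_lt_rowLen : ∀ x ∈ μ.cells, x.2 ∈ Finset.range (μ.rowLen 0) := fun x hx =>
    Finset.mem_range.2 (YoungDiagram.mem_iff_lt_rowLen.1 (μ.up_left_mem (Nat.zero_le _) le_rfl hx))
  rw [← Finset.sum_fiberwise_of_maps_to snd_lt_rowLen]
  refine Finset.sum_congr rfl fun c _ => ?_
  change _ = ∑ x ∈ μ.col c, f x
  rw [YoungDiagram.col_eq_prod, Finset.sum_product, Fin.sum_univ_eq_sum_range (fun r => f (r, c))]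
  simp only [Finset.sum_singleton]

theorem sum_comp_perm_mul_lt_sum_mul_of_strictMono {α : Type*} [Semiring α] [LinearOrder α]
    [IsStrictOrderedRing α] [ExistsAddOfLE α] {n : ℕ} {f g : Fin n → α} (hf : StrictMono f)
    (hg : StrictMono g) {σ : Equiv.Perm (Fin n)} (hσ : σ ≠ 1) :
    ∑ c, f (σ c) * g c < ∑ c, f c * g c := by
  have monovary : Monovary f g := hf.monotone.monovary hg.monotone
  refine monovary.sum_comp_perm_mul_lt_sum_mul_iff.2 fun hmono => hσ (σ.monotone_iff.1 ?_)
  exact monotone_iff_forall_lt.2 fun a b hab => hf.le_iff_le.1 (hmono (hg hab))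

/-- The monomial `X ^ d` is the leading monomial of `p` for the weights `w`: it has coefficient `1`,
and every other monomial of `p` has strictly smaller weight. Distinct monomials may have equal or
incomparable weights, so no monomial order is involved. -/
structure HasLeadingMonomial {σ R M : Type*} [CommSemiring R] [AddCommMonoid M] [PartialOrder M]
    (w : σ → M) (p : MvPolynomial σ R) (d : σ →₀ ℕ) : Prop where
  coeff_eq_one : p.coeff d = 1
  weight_lt : ∀ e ∈ p.support, e ≠ d → Finsupp.weight w e < Finsupp.weight w d

namespace HasLeadingMonomial

variable {σ R M : Type*} [AddCommMonoid M] [PartialOrder M] {w : σ → M}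

section CommSemiring

variable [CommSemiring R] {p q : MvPolynomial σ R} {d e : σ →₀ ℕ}

theorem weight_le (hp : HasLeadingMonomial w p d) (he : e ∈ p.support) :
    Finsupp.weight w e ≤ Finsupp.weight w d := by
  rcases eq_or_ne e d with rfl | hne
  · exact le_rfl
  · exact (hp.weight_lt e he hne).le

theorem one : HasLeadingMonomial w (1 : MvPolynomial σ R) 0 where
  coeff_eq_one := MvPolynomial.coeff_zero_one
  weight_lt _ he hne :=
    absurd (Finset.mem_singleton.1 (MvPolynomial.support_monomial_subset he)) hne

theorem sum_monomial {ι : Type*} {s : Finset ι} {d : ι → σ →₀ ℕ} {a : ι → R} {i : ι}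
    (hi : i ∈ s) (ha : a i = 1)
    (hlt : ∀ j ∈ s, j ≠ i → Finsupp.weight w (d j) < Finsupp.weight w (d i)) :
    HasLeadingMonomial w (∑ j ∈ s, MvPolynomial.monomial (d j) (a j)) (d i) := by
  classical
  constructor
  · rw [MvPolynomial.coeff_sum, Finset.sum_eq_single_of_mem i hi, MvPolynomial.coeff_monomial,
      if_pos rfl, ha]
    intro j hj hji
    exact (MvPolynomial.coeff_monomial _ _ _).trans
      (if_neg fun h => (hlt j hj hji).ne (congrArg (Finsupp.weight w) h))
  · intro e he hne
    obtain ⟨j, hj, hej⟩ := Finset.mem_biUnion.1 (MvPolynomial.support_sum he)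
    obtain rfl := Finset.mem_singleton.1 (MvPolynomial.support_monomial_subset hej)
    exact hlt j hj fun h => hne (congrArg d h)

variable [IsOrderedCancelAddMonoid M]

theorem weight_add_lt (hp : HasLeadingMonomial w p d) (hq : HasLeadingMonomial w q e)
    {a b : σ →₀ ℕ} (ha : a ∈ p.support) (hb : b ∈ q.support) (hne : (a, b) ≠ (d, e)) :
    Finsupp.weight w (a + b) < Finsupp.weight w (d + e) := by
  rw [map_add, map_add]
  by_cases had : a = d
  · have hbe : b ≠ e := fun hbe => hne (Prod.ext had hbe)
    exact add_lt_add_of_le_of_lt (hp.weight_le ha) (hq.weight_lt b hb hbe)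
  · exact add_lt_add_of_lt_of_le (hp.weight_lt a ha had) (hq.weight_le hb)

theorem mul (hp : HasLeadingMonomial w p d) (hq : HasLeadingMonomial w q e) :
    HasLeadingMonomial w (p * q) (d + e) := by
  classical
  constructor
  · have unique : UniqueAdd p.support q.support d e := fun a b ha hb hab => by
      by_contra hne
      exact (hp.weight_add_lt hq ha hb fun h => hne (Prod.ext_iff.1 h)).ne
        (congrArg (Finsupp.weight w) hab)
    calc (p * q).coeff (d + e) = p.coeff d * q.coeff e :=
          AddMonoidAlgebra.coeff_mul_add_of_uniqueAdd unique
      _ = 1 := by rw [hp.coeff_eq_one, hq.coeff_eq_one, one_mul]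
  · intro f hf hne
    obtain ⟨a, ha, b, hb, rfl⟩ := Finset.mem_add.1 (MvPolynomial.support_mul p q hf)
    refine hp.weight_add_lt hq ha hb ?_
    rintro ⟨⟩
    exact hne rfl

theorem prod {ι : Type*} {s : Finset ι} {p : ι → MvPolynomial σ R} {d : ι → σ →₀ ℕ}
    (h : ∀ i ∈ s, HasLeadingMonomial w (p i) (d i)) :
    HasLeadingMonomial w (∏ i ∈ s, p i) (∑ i ∈ s, d i) := by
  classical
  induction s using Finset.induction_on with
  | empty => simpa only [Finset.prod_empty, Finset.sum_empty] using one
  | insert i s hi ih =>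
    rw [Finset.prod_insert hi, Finset.sum_insert hi]
    exact (h i (Finset.mem_insert_self i s)).mul
      (ih fun j hj => h j (Finset.mem_insert_of_mem hj))

end CommSemiring

theorem linearIndependent [CommRing R] {ι : Type*} {p : ι → MvPolynomial σ R} {d : ι → σ →₀ ℕ}
    (hd : Function.Injective d) (hp : ∀ i, HasLeadingMonomial w (p i) (d i)) :
    LinearIndependent R p := by
  classical
  rw [linearIndependent_iff']
  intro s g hg
  by_contra! hne
  have nonempty : (s.filter (g · ≠ 0)).Nonempty :=
    hne.imp fun i hi => Finset.mem_filter.2 hi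
  obtain ⟨j, hj, hmax⟩ :=
    Finset.exists_maximalFor (fun i => Finsupp.weight w (d i)) _ nonempty
  obtain ⟨hjs, hgj⟩ := Finset.mem_filter.1 hj
  have coeff_eq_zero : ∀ i ∈ s, i ≠ j → (g i • p i).coeff (d j) = 0 := by
    intro i hi hij
    rw [MvPolynomial.coeff_smul]
    by_cases hgi : g i = 0
    · rw [hgi, zero_smul]
    · have hdj : d j ∉ (p i).support := fun hmem =>
        have hlt := (hp i).weight_lt _ hmem fun h => hij (hd h.symm)
        hlt.not_ge (hmax (Finset.mem_filter.2 ⟨hi, hgi⟩) hlt.le)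
      rw [MvPolynomial.notMem_support_iff.1 hdj, smul_zero]
  apply hgj
  calc g j = (g j • p j).coeff (d j) := by
        rw [MvPolynomial.coeff_smul, (hp j).coeff_eq_one, smul_eq_mul, mul_one]
    _ = (∑ i ∈ s, g i • p i).coeff (d j) := by
        rw [MvPolynomial.coeff_sum, Finset.sum_eq_single_of_mem j hjs coeff_eq_zero]
    _ = 0 := by rw [hg, MvPolynomial.coeff_zero]

end HasLeadingMonomial

section YoungPolynomials

variable (R : Type*) [CommRing R]

/-- The Slater operator with coefficients in an arbitrary commutative ring `R`; it is `slaterOp`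
for `R = ℂ`. -/
noncomputable def slaterPoly {k : ℕ} (i : Fin k → ℕ) : MvPolynomial (ℕ × ℕ) R :=
  (Matrix.of fun r c : Fin k => MvPolynomial.X ((r : ℕ), i c)).det

/-- The Young operator with coefficients in an arbitrary commutative ring `R`; it is `youngOp`
for `R = ℂ`. -/
noncomputable def youngPoly (μ : YoungDiagram) (T : ℕ → ℕ → ℕ) : MvPolynomial (ℕ × ℕ) R :=
  ∏ c ∈ Finset.range (μ.rowLen 0), slaterPoly R (fun r : Fin (μ.colLen c) => T (r : ℕ) c)

/-- The exponent vector `(r, x) ↦ μ_T(x, r)` counting the occurrences of the entry `x` in row `r`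
of a filling `T` of `μ`. -/
noncomputable def contentExponent (μ : YoungDiagram) (T : ℕ → ℕ → ℕ) : ℕ × ℕ →₀ ℕ :=
  ∑ x ∈ μ.cells, Finsupp.single (x.1, T x.1 x.2) 1

/-- The weight of the variable `X (r, x)` by which leading monomials of Young operators are singled
out: a product, so that the weights of the terms of a Slater operator are the sums compared by the
rearrangement inequality. -/
def rowMulEntry (v : ℕ × ℕ) : ℕ := v.1 * v.2

theorem slaterPoly_eq_sum_monomial {k : ℕ} (i : Fin k → ℕ) :
    slaterPoly R i = ∑ σ : Equiv.Perm (Fin k),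
      MvPolynomial.monomial (∑ c : Fin k, Finsupp.single ((σ c : ℕ), i c) 1)
        ((σ.sign : ℤ) : R) := by
  rw [slaterPoly, Matrix.det_apply']
  refine Finset.sum_congr rfl fun σ _ => ?_
  rw [← mul_one ((σ.sign : ℤ) : R), ← MvPolynomial.C_mul_monomial, MvPolynomial.monomial_sum_one,
    map_intCast]
  rfl

theorem hasLeadingMonomial_slaterPoly {k : ℕ} {i : Fin k → ℕ} (hi : StrictMono i) :
    HasLeadingMonomial rowMulEntry (slaterPoly R i)
      (∑ r : Fin k, Finsupp.single ((r : ℕ), i r) 1) := by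
  rw [slaterPoly_eq_sum_monomial]
  refine HasLeadingMonomial.sum_monomial (Finset.mem_univ 1) (by simp) fun σ _ hσ => ?_
  simpa only [map_sum, Finsupp.weight_single, one_smul, rowMulEntry, Equiv.Perm.one_apply]
    using sum_comp_perm_mul_lt_sum_mul_of_strictMono Fin.val_strictMono hi hσ

theorem hasLeadingMonomial_youngPoly {μ : YoungDiagram} {T : ℕ → ℕ → ℕ}
    (hT : ∀ c, StrictMono fun r : Fin (μ.colLen c) => T r c) :
    HasLeadingMonomial rowMulEntry (youngPoly R μ T) (contentExponent μ T) := by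
  rw [contentExponent, ← sum_range_rowLen_sum_fin_colLen]
  exact HasLeadingMonomial.prod fun c _ => hasLeadingMonomial_slaterPoly R (hT c)

theorem contentExponent_apply (μ : YoungDiagram) (T : ℕ → ℕ → ℕ) (r x : ℕ) :
    contentExponent μ T (r, x) = Finset.card {c : Fin (μ.rowLen r) | T r c = x} := by
  simp only [contentExponent, Finsupp.finsetSum_apply, Finsupp.single_apply,
    ← Finset.card_filter]
  refine (Finset.card_bij (fun (c : Fin (μ.rowLen r)) _ => (r, (c : ℕ))) ?_ ?_ ?_).symm
  · intro c hc
    have hcell : (r, (c : ℕ)) ∈ μ := YoungDiagram.mem_iff_lt_rowLen.2 c.2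
    exact Finset.mem_filter.2 ⟨hcell, congrArg (Prod.mk r) (Finset.mem_filter.1 hc).2⟩
  · intro a _ b _ hab
    exact Fin.ext (congrArg Prod.snd hab)
  · rintro ⟨_, c⟩ hc
    obtain ⟨hcell, heq⟩ := Finset.mem_filter.1 hc
    obtain ⟨rfl, rfl⟩ := Prod.mk_inj.1 heq
    exact ⟨⟨c, YoungDiagram.mem_iff_lt_rowLen.1 hcell⟩, by simp⟩

theorem contentExponent_injective (μ : YoungDiagram) :
    Function.Injective fun T : SemistandardYoungTableau μ => contentExponent μ T := by
  intro T U hTU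
  have row_monotone (V : SemistandardYoungTableau μ) (r : ℕ) :
      Monotone fun c : Fin (μ.rowLen r) => V r c := fun _ b hab =>
    V.row_weak_of_le hab (YoungDiagram.mem_iff_lt_rowLen.2 b.2)
  have row_eq (r : ℕ) : (fun c : Fin (μ.rowLen r) => T r c) = fun c : Fin (μ.rowLen r) => U r c :=
    eq_of_monotone_of_card_fiber_eq (row_monotone T r) (row_monotone U r) fun x => by
      simpa only [contentExponent_apply] using DFunLike.congr_fun hTU (r, x)
  ext r c
  by_cases hc : (r, c) ∈ μ
  · exact congrFun (row_eq r) ⟨c, YoungDiagram.mem_iff_lt_rowLen.1 hc⟩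
  · rw [T.zeros hc, U.zeros hc]

end YoungPolynomials

theorem stmt4_general (R : Type*) [CommRing R] (μ : YoungDiagram) :
    LinearIndependent R fun T : SemistandardYoungTableau μ => youngPoly R μ T :=
  HasLeadingMonomial.linearIndependent (contentExponent_injective μ) fun T =>
    hasLeadingMonomial_youngPoly R fun _ _ b hab =>
      T.col_strict hab (YoungDiagram.mem_iff_lt_colLen.2 b.2)

/-- The Young operators of the semistandard Young tableaux of shape `μ` with entries in
`{1,…,m}` (here 0-indexed: entries `< m`) are linearly independent over `ℂ`. -/
theorem stmt4 (m : ℕ) (μ : YoungDiagram) :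
    LinearIndependent ℂ
      (fun T : {T : SemistandardYoungTableau μ // ∀ i j, (i, j) ∈ μ → T.1 i j < m} =>
        youngOp μ (fun i j => T.1 i j)) :=
  (stmt4_general ℂ μ).comp Subtype.val Subtype.val_injective
end

section
/- Fix a Young diagram λ with n cells and a natural number m. For any filling T of λ with entries in {1,…,m}, the Young operator Y(T) lies in the ℤ-linear span of the Young operators {Y(T') : T' a semistandard Young tableau of shape λ with entries in {1,…,m}}. (Straightening: every Young operator of shape λ is an integer linear combination of semistandard Young operators of the same shape, using the antisymmetry of Slater operators within columns and the Sylvester exchange relations between adjacent columns.) -/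
open scoped BigOperators

/-!
Let `C` be a filling whose columns are strictly increasing. If it is not semistandard, some row `r`
has `C (c + 1) r < C c r` for adjacent columns `c` and `c + 1`. The entries of column `c` from row
`r` down and those of column `c + 1` down to row `r` are one more than the length `p` of column `c`,
so the form obtained by alternating the product of the two minors in these entries is an alternating
form in `p + 1` vectors of `R ^ p`, hence zero. Summing over cosets of the Young subgroup, rather
than over all permutations, keeps the coefficients `± 1`, and expresses the bideterminant of `C` in
terms of fillings in which an entry of column `c` has been exchanged for one of column `c + 1`. As
the exchanged entries of column `c` are at least `C c r` and those of column `c + 1` are smaller,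
each exchange moves smaller entries to the left, so the process terminates.
-/

open Finset Equiv

theorem sum_lt_sum_of_card_eq_of_sdiff {β M : Type*} [DecidableEq β] [AddCommMonoid M]
    [PartialOrder M] [IsOrderedCancelAddMonoid M] {s t : Finset β} {f : β → M} {m : M}
    (hcard : #s = #t) (hne : (s \ t).Nonempty) (hs : ∀ b ∈ s \ t, f b < m)
    (ht : ∀ b ∈ t \ s, m ≤ f b) : ∑ b ∈ s, f b < ∑ b ∈ t, f b := by
  have hsdiff : ∑ b ∈ s \ t, f b < ∑ b ∈ t \ s, f b :=
    calc ∑ b ∈ s \ t, f b < ∑ _b ∈ s \ t, m := sum_lt_sum_of_nonempty hne hs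
      _ = ∑ _b ∈ t \ s, m := by rw [sum_const, sum_const, card_sdiff_comm hcard]
      _ ≤ ∑ b ∈ t \ s, f b := sum_le_sum ht
  rw [← sum_inter_add_sum_sdiff s t f, ← sum_inter_add_sum_sdiff t s f, inter_comm t s]
  exact add_lt_add_right hsdiff _

section Exchange

variable {R M N A ι κ n : Type*} [CommRing R] [AddCommGroup M] [Module R M] [AddCommGroup N]
  [Module R N]

theorem alternatingMap_eq_zero_of_card_lt [Fintype n] [Fintype ι] (e : Module.Basis n R M)
    (hcard : Fintype.card n < Fintype.card ι) (f : M [⋀^ι]→ₗ[R] N) : f = 0 :=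
  e.ext_alternating fun v hv => absurd (Fintype.card_le_of_injective v hv) hcard.not_ge

/-- The alternating map obtained from `f` by freezing the arguments with index outside `s`; the
values of `z` on `s` are irrelevant. -/
def alternatingRestrict (f : M [⋀^ι]→ₗ[R] N) (s : Set ι) [DecidablePred (· ∈ s)] (z : ι → M) :
    M [⋀^s]→ₗ[R] N where
  __ := f.toMultilinearMap.domDomRestrict (· ∈ s) fun i => z i
  map_eq_zero_of_eq' v i j hv hij := by
    refine f.map_eq_zero_of_eq _ (i := i) (j := j) ?_ (Subtype.coe_ne_coe.2 hij)
    simp [hv]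

theorem alternatingRestrict_apply_eq {f : M [⋀^ι]→ₗ[R] N} {s : Set ι} [DecidablePred (· ∈ s)]
    {z w : ι → M} (hzw : ∀ i ∉ s, w i = z i) :
    alternatingRestrict f s z (fun i => w i) = f w := by
  refine congrArg f (funext fun i => ?_)
  by_cases hi : i ∈ s
  · exact dif_pos hi
  · exact (dif_neg hi).trans (hzw i hi).symm

/-- A permutation of a disjoint union crosses if it moves some element of the left summand to the
right one, i.e. if it is nontrivial modulo the Young subgroup `Perm ι × Perm κ`. -/
def IsCrossing (σ : Perm (ι ⊕ κ)) : Prop :=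
  ∃ i k, σ (Sum.inl i) = Sum.inr k

theorem modSumCongr_mk_eq_one_of_not_isCrossing [Finite ι] [Finite κ] {σ : Perm (ι ⊕ κ)}
    (hσ : ¬ IsCrossing σ) : (Quotient.mk'' σ : Perm.ModSumCongr ι κ) = Quotient.mk'' 1 := by
  have hrange : σ ∈ (Perm.sumCongrHom ι κ).range := by
    refine Perm.mem_sumCongrHom_range_of_perm_mapsTo_inl ?_
    rintro _ ⟨i, rfl⟩
    rcases hi : σ (Sum.inl i) with j | k
    · exact ⟨j, rfl⟩
    · exact absurd ⟨i, k, hi⟩ hσ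
  refine Quotient.sound' (QuotientGroup.leftRel_apply.2 ?_)
  simpa using hrange

theorem mul_mem_span_crossing [Fintype n] [Fintype ι] [Fintype κ] (e : Module.Basis n R M)
    (hcard : Fintype.card n < Fintype.card ι + Fintype.card κ) (f : M [⋀^ι]→ₗ[R] R)
    (g : M [⋀^κ]→ₗ[R] R) (v : ι ⊕ κ → M) :
    f (fun i => v (.inl i)) * g (fun k => v (.inr k)) ∈ Submodule.span ℤ
      ((fun σ : Perm (ι ⊕ κ) => f (fun i => v (σ (.inl i))) * g (fun k => v (σ (.inr k)))) ''
        {σ | IsCrossing σ}) := by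
  classical
  let F : Perm.ModSumCongr ι κ → R := fun τ =>
    LinearMap.mul' R R (AlternatingMap.domCoprod.summand f g τ v)
  have hF (σ : Perm (ι ⊕ κ)) : F (Quotient.mk'' σ) = (Perm.sign σ : ℤ) •
      (f (fun i => v (σ (.inl i))) * g (fun k => v (σ (.inr k)))) := by
    dsimp only [F]
    rw [AlternatingMap.domCoprod.summand_mk'', _root_.smul_apply, Units.smul_def, map_zsmul]
    rfl
  have hF_one : F (Quotient.mk'' 1) = f (fun i => v (.inl i)) * g (fun k => v (.inr k)) := by
    simp [hF]
  have hF_sum : ∑ τ, F τ = 0 := by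
    have hzero : f.domCoprod g = 0 :=
      alternatingMap_eq_zero_of_card_lt e (hcard.trans_eq Fintype.card_sum.symm) _
    simpa [F, AlternatingMap.domCoprod_apply, _root_.sum_apply] using
      congrArg (LinearMap.mul' R R) (DFunLike.congr_fun hzero v)
  rw [← hF_one, eq_neg_of_add_eq_zero_left ((add_sum_erase _ F (mem_univ _)).trans hF_sum)]
  refine Submodule.neg_mem _ (Submodule.sum_mem _ fun τ hτ => ?_)
  induction τ using Quotient.inductionOn' with | _ σ
  rw [hF]
  refine Submodule.smul_mem _ _ (Submodule.subset_span ⟨σ, ?_, rfl⟩)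
  by_contra hσ
  exact ne_of_mem_erase hτ (modSumCongr_mk_eq_one_of_not_isCrossing hσ)

/-- A permutation of `ι ⊕ κ` that moves only elements of `s ⊆ ι` and `t ⊆ κ`, and crosses: the
index of a term in the exchange relation between `s` and `t`. -/
structure IsExchange (s : Set ι) (t : Set κ) (π : Perm (ι ⊕ κ)) : Prop where
  left_fixed : ∀ i ∉ s, π (.inl i) = .inl i
  right_fixed : ∀ k ∉ t, π (.inr k) = .inr k
  isCrossing : IsCrossing π

theorem isExchange_viaEmbedding {s : Set ι} {t : Set κ} {σ : Perm (s ⊕ t)} (hσ : IsCrossing σ) :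
    IsExchange s t (σ.viaEmbedding
      ((Function.Embedding.subtype (· ∈ s)).sumMap (.subtype (· ∈ t)))) where
  left_fixed i hi := Perm.viaEmbedding_apply_of_notMem _ _ _ (by simpa using hi)
  right_fixed k hk := Perm.viaEmbedding_apply_of_notMem _ _ _ (by simpa using hk)
  isCrossing := by
    obtain ⟨i, k, hik⟩ := hσ
    exact ⟨i, k, (Perm.viaEmbedding_apply σ _ (.inl i)).trans (by rw [hik]; rfl)⟩

theorem mul_mem_span_exchange [Fintype n] (e : Module.Basis n R M) {s : Set ι} {t : Set κ}
    [Fintype s] [Fintype t] (hcard : Fintype.card n < Fintype.card s + Fintype.card t)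
    (f : M [⋀^ι]→ₗ[R] R) (g : M [⋀^κ]→ₗ[R] R) (v : ι ⊕ κ → M) :
    f (fun i => v (.inl i)) * g (fun k => v (.inr k)) ∈ Submodule.span ℤ
      ((fun π : Perm (ι ⊕ κ) => f (fun i => v (π (.inl i))) * g (fun k => v (π (.inr k)))) ''
        {π | IsExchange s t π}) := by
  classical
  let emb : s ⊕ t ↪ ι ⊕ κ := (Function.Embedding.subtype (· ∈ s)).sumMap (.subtype (· ∈ t))
  have hmem := mul_mem_span_crossing e hcard (alternatingRestrict f s fun i => v (.inl i))
    (alternatingRestrict g t fun k => v (.inr k)) (v ∘ emb)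
  have hleft : alternatingRestrict f s (fun i => v (.inl i)) (fun i => v (emb (.inl i))) =
      f (fun i => v (.inl i)) := alternatingRestrict_apply_eq fun _ _ => rfl
  have hright : alternatingRestrict g t (fun k => v (.inr k)) (fun k => v (emb (.inr k))) =
      g (fun k => v (.inr k)) := alternatingRestrict_apply_eq fun _ _ => rfl
  simp only [Function.comp_apply, hleft, hright] at hmem
  refine Submodule.span_mono ?_ hmem
  rintro _ ⟨σ, hσ, rfl⟩
  have hπ := isExchange_viaEmbedding hσ
  refine ⟨σ.viaEmbedding emb, hπ, ?_⟩
  have hσ_apply (z : s ⊕ t) : emb (σ z) = σ.viaEmbedding emb (emb z) :=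
    (Perm.viaEmbedding_apply σ emb z).symm
  simp only [hσ_apply]
  exact congrArg₂ (· * ·)
    (alternatingRestrict_apply_eq fun i hi => congrArg v (hπ.left_fixed i hi)).symm
    (alternatingRestrict_apply_eq fun k hk => congrArg v (hπ.right_fixed k hk)).symm

theorem IsExchange.sum_lt_sum [Fintype ι] [AddCommMonoid A] [PartialOrder A]
    [IsOrderedCancelAddMonoid A] {s : Set ι} {t : Set κ} {π : Perm (ι ⊕ κ)}
    (hπ : IsExchange s t π) {U : ι ⊕ κ → A} {a : A} (hs : ∀ i ∈ s, a ≤ U (.inl i))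
    (ht : ∀ k ∈ t, U (.inr k) < a) : ∑ i, U (π (.inl i)) < ∑ i, U (.inl i) := by
  classical
  let E : Finset (ι ⊕ κ) := univ.map .inl
  suffices ∑ z ∈ E.map π.toEmbedding, U z < ∑ z ∈ E, U z by simpa [E] using this
  refine sum_lt_sum_of_card_eq_of_sdiff (m := a) (card_map _) ?_ ?_ ?_
  · obtain ⟨i, k, hik⟩ := hπ.isCrossing
    refine ⟨.inr k, mem_sdiff.2 ⟨?_, by simp [E]⟩⟩
    exact mem_map.2 ⟨.inl i, by simp [E], hik⟩
  · rintro (i | k) hz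
    · simp [E] at hz
    · refine ht k (by_contra fun hk => ?_)
      simp [E, π.symm_apply_eq.2 (hπ.right_fixed k hk).symm] at hz
  · rintro (i | k) hz
    · refine hs i (by_contra fun hi => ?_)
      simp [E, π.symm_apply_eq.2 (hπ.left_fixed i hi).symm] at hz
    · simp [E] at hz

end Exchange

section InitialMinor

variable {R α : Type*} [CommRing R] {k p q : ℕ}

/-- The minor of `x` on its first `k` rows and the columns `u 0, …, u (k - 1)`. -/
def initialMinor (x : Matrix ℕ α R) (u : Fin k → α) : R :=
  (x.submatrix Fin.val u).det

variable (R) in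
/-- The determinant of the first `k` coordinates of `k` vectors in `R ^ p`, as an alternating
form. -/
noncomputable def initialMinorForm (h : k ≤ p) : (Fin p → R) [⋀^Fin k]→ₗ[R] R :=
  Matrix.detRowAlternating.compLinearMap (LinearMap.funLeft R R (Fin.castLE h))

theorem initialMinorForm_apply (h : k ≤ p) (x : Matrix ℕ α R) (u : Fin k → α) :
    initialMinorForm R h (fun c r => x r (u c)) = initialMinor x u :=
  Matrix.det_transpose (x.submatrix Fin.val u)

theorem initialMinor_eq_zero_of_not_injective (x : Matrix ℕ α R) {u : Fin k → α}
    (hu : ¬ Function.Injective u) : initialMinor x u = 0 := by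
  obtain ⟨i, j, hij, hne⟩ := Function.not_injective_iff.1 hu
  exact Matrix.det_zero_of_column_eq hne fun r => congrArg (x r) hij

theorem initialMinor_eq_sign_smul_comp_perm (x : Matrix ℕ α R) (u : Fin k → α)
    (σ : Perm (Fin k)) : initialMinor x u = Perm.sign σ • initialMinor x (u ∘ σ) := by
  have hperm : initialMinor x (u ∘ σ) = Perm.sign σ * initialMinor x u :=
    Matrix.det_permute' σ (x.submatrix Fin.val u)
  rw [hperm, Units.smul_def, zsmul_eq_mul, ← mul_assoc, ← Int.cast_mul, Int.units_coe_mul_self,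
    Int.cast_one, one_mul]

theorem initialMinor_mul_initialMinor_mem_span_exchange (x : Matrix ℕ α R) (hqp : q ≤ p)
    (r : Fin q) (U : Fin p ⊕ Fin q → α) :
    initialMinor x (fun i => U (.inl i)) * initialMinor x (fun i => U (.inr i)) ∈
      Submodule.span ℤ
        ((fun π : Perm (Fin p ⊕ Fin q) =>
          initialMinor x (fun i => U (π (.inl i))) * initialMinor x (fun i => U (π (.inr i)))) ''
        {π | IsExchange (Set.Ici (Fin.castLE hqp r)) (Set.Iic r) π}) := by
  have hcard : Fintype.card (Fin p) <
      Fintype.card (Set.Ici (Fin.castLE hqp r)) + Fintype.card (Set.Iic r) := by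
    rw [Fintype.card_fin, Fintype.card_Ici, Fintype.card_Iic, Fin.card_Ici, Fin.card_Iic,
      Fin.val_castLE]
    omega
  simpa only [initialMinorForm_apply] using mul_mem_span_exchange (Pi.basisFun R (Fin p)) hcard
    (initialMinorForm R le_rfl) (initialMinorForm R hqp) (fun z r => x r (U z))

end InitialMinor

/-- A filling of the Young diagram `μ`, recorded as the family of its columns. -/
abbrev ColumnFilling (μ : YoungDiagram) : Type :=
  ∀ j, Fin (μ.colLen j) → ℕ

namespace ColumnFilling

variable {R : Type*} [CommRing R] {μ : YoungDiagram}

/-- The columns of a filling of `μ` given by entries `T i j`; entries outside `μ` are ignored. -/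
def ofEntries (μ : YoungDiagram) (T : ℕ → ℕ → ℕ) : ColumnFilling μ :=
  fun j i => T i j

/-- The product of the initial minors of `x` on the columns of a filling: the bideterminant, which
is the Young operator when `x` is the generic matrix. -/
def bideterminant (x : Matrix ℕ ℕ R) (C : ColumnFilling μ) : R :=
  ∏ j ∈ range (μ.rowLen 0), initialMinor x (C j)

/-- The multiset of entries of a filling. -/
def content (C : ColumnFilling μ) : Multiset ℕ :=
  ∑ j ∈ range (μ.rowLen 0), ∑ i, {C j i}

/-- The sum of the entries, weighted by the distance of their column to the right end of `μ`: the
quantity that decreases along the straightening algorithm. -/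
def weight (C : ColumnFilling μ) : ℕ :=
  ∑ j ∈ range (μ.rowLen 0), (μ.rowLen 0 - j) * ∑ i, C j i

/-- Semistandardness in terms of columns; the row condition compares adjacent columns only. -/
structure IsSemistandard (C : ColumnFilling μ) : Prop where
  col_strictMono : ∀ j, StrictMono (C j)
  row_le : ∀ j (r : Fin (μ.colLen (j + 1))),
    C j (r.castLE (μ.colLen_anti _ _ j.le_succ)) ≤ C (j + 1) r

theorem lt_rowLen_zero {i j : ℕ} (h : i < μ.colLen j) : j < μ.rowLen 0 :=
  YoungDiagram.mem_iff_lt_rowLen.1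
    (μ.up_left_mem i.zero_le le_rfl (YoungDiagram.mem_iff_lt_colLen.2 h))

theorem forall_mem_content_ofEntries {p : ℕ → Prop} {T : ℕ → ℕ → ℕ} :
    (∀ a ∈ content (ofEntries μ T), p a) ↔ ∀ i j, (i, j) ∈ μ → p (T i j) := by
  simp only [content, ofEntries, Multiset.mem_sum, Multiset.mem_singleton, mem_range, mem_univ,
    true_and, YoungDiagram.mem_iff_lt_colLen]
  constructor
  · exact fun h i j hij => h _ ⟨j, lt_rowLen_zero hij, ⟨i, hij⟩, rfl⟩
  · rintro h _ ⟨j, -, i, rfl⟩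
    exact h i j i.2

theorem forall_entries_iff_of_content_eq {p : ℕ → Prop} {T T' : ℕ → ℕ → ℕ}
    (h : (ofEntries μ T').content = (ofEntries μ T).content) :
    (∀ i j, (i, j) ∈ μ → p (T' i j)) ↔ ∀ i j, (i, j) ∈ μ → p (T i j) := by
  rw [← forall_mem_content_ofEntries, h, forall_mem_content_ofEntries]

/-- The filling obtained by sorting each column in weakly increasing order. -/
def sortColumns (C : ColumnFilling μ) : ColumnFilling μ :=
  fun j => C j ∘ Tuple.sort (C j)

theorem content_sortColumns (C : ColumnFilling μ) : C.sortColumns.content = C.content :=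
  sum_congr rfl fun j _ => Equiv.sum_comp _ fun i => {C j i}

theorem weight_sortColumns (C : ColumnFilling μ) : C.sortColumns.weight = C.weight :=
  sum_congr rfl fun j _ => congrArg _ (Equiv.sum_comp _ (C j))

theorem strictMono_sortColumns {C : ColumnFilling μ} {j : ℕ} (hC : Function.Injective (C j)) :
    StrictMono (C.sortColumns j) :=
  (Tuple.monotone_sort (C j)).strictMono_of_injective (hC.comp (Tuple.sort (C j)).injective)

theorem exists_bideterminant_eq_smul_sortColumns (x : Matrix ℕ ℕ R) (C : ColumnFilling μ) :
    ∃ ε : ℤˣ, C.bideterminant x = ε • C.sortColumns.bideterminant x :=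
  ⟨∏ j ∈ range (μ.rowLen 0), Perm.sign (Tuple.sort (C j)),
    (prod_congr rfl fun j _ => initialMinor_eq_sign_smul_comp_perm x (C j) _).trans
      (prod_smul _ _ _)⟩

theorem bideterminant_eq_zero_of_not_injective (x : Matrix ℕ ℕ R) {C : ColumnFilling μ} {j : ℕ}
    (hj : ¬ Function.Injective (C j)) : C.bideterminant x = 0 := by
  obtain ⟨i, -⟩ := Function.not_injective_iff.1 hj
  exact prod_eq_zero (mem_range.2 (lt_rowLen_zero i.2)) (initialMinor_eq_zero_of_not_injective x hj)

section Exchange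

variable {c : ℕ}

/-- The filling obtained by permuting the entries of the columns `c` and `c + 1` along `π`. -/
def exchange (C : ColumnFilling μ) (c : ℕ)
    (π : Perm (Fin (μ.colLen c) ⊕ Fin (μ.colLen (c + 1)))) : ColumnFilling μ :=
  Function.update
    (Function.update C c fun i => Sum.elim (C c) (C (c + 1)) (π (.inl i)))
    (c + 1) fun i => Sum.elim (C c) (C (c + 1)) (π (.inr i))

theorem exchange_one (C : ColumnFilling μ) : C.exchange c 1 = C := by
  simp [exchange]

@[to_additive]
theorem prod_exchange {M : Type*} [CommMonoid M] (hc : c + 1 < μ.rowLen 0) (C : ColumnFilling μ)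
    (π : Perm (Fin (μ.colLen c) ⊕ Fin (μ.colLen (c + 1))))
    (F : ∀ j, (Fin (μ.colLen j) → ℕ) → M) :
    ∏ j ∈ range (μ.rowLen 0), F j (C.exchange c π j) =
      F c (fun i => Sum.elim (C c) (C (c + 1)) (π (.inl i))) *
        F (c + 1) (fun i => Sum.elim (C c) (C (c + 1)) (π (.inr i))) *
          ∏ j ∈ ((range (μ.rowLen 0)).erase c).erase (c + 1), F j (C j) := by
  rw [← mul_prod_erase (range (μ.rowLen 0)) _ (a := c) (mem_range.2 (by omega)),
    ← mul_prod_erase ((range (μ.rowLen 0)).erase c) _ (a := c + 1) (by simpa), mul_assoc]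
  congr 1
  · simp [exchange]
  congr 1
  · simp [exchange]
  refine prod_congr rfl fun j hj => ?_
  obtain ⟨hj_succ, hj_ne, -⟩ := by simpa using hj
  simp [exchange, hj_succ, hj_ne]

theorem content_exchange (hc : c + 1 < μ.rowLen 0) (C : ColumnFilling μ)
    (π : Perm (Fin (μ.colLen c) ⊕ Fin (μ.colLen (c + 1)))) :
    (C.exchange c π).content = C.content := by
  have hpair := Equiv.sum_comp π fun z => ({Sum.elim (C c) (C (c + 1)) z} : Multiset ℕ)
  simp only [Fintype.sum_sum_type] at hpair
  conv_rhs => rw [← C.exchange_one (c := c)]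
  simp only [content, sum_exchange hc C _ fun _ u => ∑ i, ({u i} : Multiset ℕ), hpair,
    Perm.one_apply]

theorem weight_exchange_lt (hc : c + 1 < μ.rowLen 0) (C : ColumnFilling μ)
    {π : Perm (Fin (μ.colLen c) ⊕ Fin (μ.colLen (c + 1)))}
    (hlt : ∑ i, Sum.elim (C c) (C (c + 1)) (π (.inl i)) < ∑ i, C c i) :
    (C.exchange c π).weight < C.weight := by
  have hpair := Equiv.sum_comp π (Sum.elim (C c) (C (c + 1)))
  simp only [Fintype.sum_sum_type, Sum.elim_inl, Sum.elim_inr] at hpair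
  conv_rhs => rw [← C.exchange_one (c := c)]
  simp only [weight, sum_exchange hc C _ fun j u => (μ.rowLen 0 - j) * ∑ i, u i, Perm.one_apply,
    Sum.elim_inl, Sum.elim_inr]
  obtain ⟨d, hd⟩ : ∃ d, μ.rowLen 0 - c = d + 1 := ⟨_, (Nat.succ_pred (by omega)).symm⟩
  rw [hd, show μ.rowLen 0 - (c + 1) = d by omega]
  linarith [congrArg (d * ·) hpair]

theorem bideterminant_mem_span_exchange (x : Matrix ℕ ℕ R) (C : ColumnFilling μ)
    (r : Fin (μ.colLen (c + 1))) :
    C.bideterminant x ∈ Submodule.span ℤ ((fun π => (C.exchange c π).bideterminant x) ''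
      {π | IsExchange (Set.Ici (r.castLE (μ.colLen_anti _ _ c.le_succ))) (Set.Iic r) π}) := by
  have hc := lt_rowLen_zero r.2
  let rest := ∏ j ∈ ((range (μ.rowLen 0)).erase c).erase (c + 1), initialMinor x (C j)
  have hprod (π : Perm (Fin (μ.colLen c) ⊕ Fin (μ.colLen (c + 1)))) :
      (C.exchange c π).bideterminant x =
        initialMinor x (fun i => Sum.elim (C c) (C (c + 1)) (π (.inl i))) *
          initialMinor x (fun i => Sum.elim (C c) (C (c + 1)) (π (.inr i))) * rest :=
    prod_exchange hc C π fun _ u => initialMinor x u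
  have hmem := Submodule.mem_map_of_mem (f := LinearMap.mulRight ℤ rest)
    (initialMinor_mul_initialMinor_mem_span_exchange x (μ.colLen_anti _ _ c.le_succ) r
      (Sum.elim (C c) (C (c + 1))))
  rw [Submodule.map_span, Set.image_image] at hmem
  have hC := hprod 1
  rw [exchange_one] at hC
  simpa only [hC, hprod, LinearMap.mulRight_apply, Perm.one_apply] using hmem

theorem weight_exchange_lt_of_isExchange {C : ColumnFilling μ} {r : Fin (μ.colLen (c + 1))}
    (hcol : ∀ j, Monotone (C j))
    (hr : C (c + 1) r < C c (r.castLE (μ.colLen_anti _ _ c.le_succ)))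
    {π : Perm (Fin (μ.colLen c) ⊕ Fin (μ.colLen (c + 1)))}
    (hπ : IsExchange (Set.Ici (r.castLE (μ.colLen_anti _ _ c.le_succ))) (Set.Iic r) π) :
    (C.exchange c π).weight < C.weight :=
  weight_exchange_lt (lt_rowLen_zero r.2) C <| hπ.sum_lt_sum
    (fun _ hi => hcol c hi) (fun _ hk => (hcol (c + 1) hk).trans_lt hr)

end Exchange

theorem bideterminant_mem_span_isSemistandard (x : Matrix ℕ ℕ R) (C : ColumnFilling μ) :
    C.bideterminant x ∈ Submodule.span ℤ
      (bideterminant x '' {D : ColumnFilling μ | D.IsSemistandard ∧ D.content = C.content}) := by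
  induction hw : C.weight using Nat.strong_induction_on generalizing C with
  | _ w ih =>
  by_cases hinj : ∀ j, Function.Injective (C j)
  swap
  · obtain ⟨j, hj⟩ := not_forall.1 hinj
    rw [bideterminant_eq_zero_of_not_injective x hj]
    exact Submodule.zero_mem _
  have hcol (j : ℕ) : StrictMono (C.sortColumns j) := strictMono_sortColumns (hinj j)
  obtain ⟨ε, hε⟩ := exists_bideterminant_eq_smul_sortColumns x C
  rw [hε, ← C.content_sortColumns]
  refine Submodule.smul_mem _ (ε : ℤ) ?_
  by_cases hstd : C.sortColumns.IsSemistandard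
  · exact Submodule.subset_span ⟨_, ⟨hstd, rfl⟩, rfl⟩
  obtain ⟨c, r, hr⟩ : ∃ (c : ℕ) (r : Fin (μ.colLen (c + 1))), C.sortColumns (c + 1) r <
      C.sortColumns c (r.castLE (μ.colLen_anti _ _ c.le_succ)) := by
    by_contra! hle
    exact hstd ⟨hcol, hle⟩
  refine Submodule.span_le.2 ?_ (bideterminant_mem_span_exchange x C.sortColumns r)
  rintro _ ⟨π, hπ, rfl⟩
  rw [← content_exchange (lt_rowLen_zero r.2) C.sortColumns π]
  refine ih _ ?_ _ rfl
  rw [← hw, ← C.weight_sortColumns]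
  exact weight_exchange_lt_of_isExchange (fun j => (hcol j).monotone) hr hπ

theorem IsSemistandard.exists_ofEntries_eq {C : ColumnFilling μ} (hC : C.IsSemistandard) :
    ∃ T : SemistandardYoungTableau μ, ofEntries μ T = C := by
  let entry (i j : ℕ) : ℕ := if h : i < μ.colLen j then C j ⟨i, h⟩ else 0
  have hentry {i j : ℕ} (h : i < μ.colLen j) : entry i j = C j ⟨i, h⟩ := dif_pos h
  have hrow (i : ℕ) : MonotoneOn (entry i) {j | i < μ.colLen j} := by
    refine monotoneOn_of_le_succ ?_ fun j _ hj hj_succ => ?_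
    · exact IsLowerSet.ordConnected fun a b hba ha => ha.trans_le (μ.colLen_anti _ _ hba)
    · rw [hentry hj, hentry hj_succ]
      exact hC.row_le j ⟨i, hj_succ⟩
  refine ⟨⟨entry, ?row_weak, ?col_strict, ?zeros⟩, funext₂ fun j i => hentry i.2⟩
  case row_weak =>
    intro i j₁ j₂ hj hmem
    have hlt := YoungDiagram.mem_iff_lt_colLen.1 hmem
    exact hrow i (hlt.trans_le (μ.colLen_anti _ _ hj.le)) hlt hj.le
  case col_strict =>
    intro i₁ i₂ j hi hmem
    have hlt := YoungDiagram.mem_iff_lt_colLen.1 hmem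
    rw [hentry hlt, hentry (hi.trans hlt)]
    exact hC.col_strictMono j hi
  case zeros =>
    exact fun hmem => dif_neg (mt YoungDiagram.mem_iff_lt_colLen.2 hmem)

end ColumnFilling

open ColumnFilling in
theorem stmt5_general {R : Type*} [CommRing R] (x : Matrix ℕ ℕ R) (μ : YoungDiagram)
    (T : ℕ → ℕ → ℕ) :
    (ofEntries μ T).bideterminant x ∈
      Submodule.span ℤ
        (Set.range
          (fun T' : {T' : SemistandardYoungTableau μ //
              (ofEntries μ T').content = (ofEntries μ T).content} =>
            (ofEntries μ T'.1).bideterminant x)) := by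
  refine Submodule.span_mono ?_ (bideterminant_mem_span_isSemistandard x (ofEntries μ T))
  rintro _ ⟨_, ⟨hC, hcontent⟩, rfl⟩
  obtain ⟨T', rfl⟩ := hC.exists_ofEntries_eq
  exact ⟨⟨T', hcontent⟩, rfl⟩

/-- Straightening: the Young operator of any filling of `μ` with entries in `{1,…,m}`
(0-indexed: entries `< m` on the cells) lies in the `ℤ`-span of the Young operators of the
semistandard Young tableaux of shape `μ` with entries in `{1,…,m}`. -/
theorem stmt5 (m : ℕ) (μ : YoungDiagram) (T : ℕ → ℕ → ℕ)
    (hT : ∀ i j, (i, j) ∈ μ → T i j < m) :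
    youngOp μ T ∈
      Submodule.span ℤ
        (Set.range
          (fun T' : {T' : SemistandardYoungTableau μ // ∀ i j, (i, j) ∈ μ → T'.1 i j < m} =>
            youngOp μ (fun i j => T'.1 i j))) := by
  refine Submodule.span_mono (Set.range_subset_iff.2 fun T' => ?_)
    (stmt5_general (Matrix.of fun r s => MvPolynomial.X (r, s)) μ T)
  exact ⟨⟨T'.1, (ColumnFilling.forall_entries_iff_of_content_eq (p := (· < m)) T'.2).2 hT⟩, rfl⟩
end

section
/- Let n ≥ 1 and x a real number with 0 ≤ x < 1. Then (1/n!) · Σ_{σ∈S_n} (1−x)^n · ∏_c (1 − x^{|c|})^{−1} = ∏_{k=1}^{n} (1−x)/(1−x^k), where for each permutation σ the product runs over the orbits c of σ acting on Fin n (fixed points counted as orbits of size 1). (This is the probability p^{(n)}_x that n harmonic oscillators in thermal states of Boltzmann factor x occupy the fully symmetric partition λ = (n); it equals (1/n!)Σ_σ k_x(σ) since the trivial character of S_n is identically 1.) -/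
open scoped BigOperators

/-- The finite set of orbits (cycles, with fixed points as singleton orbits) of a
permutation `σ` of `Fin n`. -/
def orbitsFinset {n : ℕ} (σ : Equiv.Perm (Fin n)) : Finset (Finset (Fin n)) :=
  Finset.univ.image fun y => Finset.univ.filter fun z => σ.SameCycle y z

/- Let `Z n f = ∑ σ, ∏ f(ℓ(c))`, the sum running over the permutations of an `n`-set and the
product over the cycles of `σ`. Expanding `∏ (f(ℓ(c)) + g(ℓ(c)))` means distributing the cycles of
`σ` over two classes, that is, choosing a `σ`-invariant set `A`. A permutation leaving `A` invariant
is a pair of permutations of `A` and of its complement, so `Z` is of binomial type: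
`Z n (f + g) = ∑ i, n.choose i * Z i f * Z (n - i) g`.

The weight `f k = (1 - x ^ k)⁻¹` satisfies `f k = x ^ k * f k + 1`. Since cycle lengths add up to
the number of points, the factor `x ^ k` only scales `Z i f` by `x ^ i`, while `Z j 1 = j!`. The
terms with `i ≤ n` of the resulting formula for `Z (n + 1) f` add up to `(n + 1) * Z n f`, so that
`(1 - x ^ (n + 1)) * Z (n + 1) f = (n + 1) * Z n f`, and the product formula follows by
induction. -/

open Finset Equiv

section Finpartition

variable {α R : Type*} [DecidableEq α] {s : Finset α}

lemma subset_biUnion_iff_mem_of_subset_parts (P : Finpartition s) {S : Finset (Finset α)}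
    (hS : S ⊆ P.parts) {c : Finset α} (hc : c ∈ P.parts) : c ⊆ S.biUnion id ↔ c ∈ S := by
  refine ⟨fun h => ?_, fun h => subset_biUnion_of_mem id h⟩
  obtain ⟨a, ha⟩ := P.nonempty_of_mem_parts hc
  obtain ⟨d, hd, had⟩ := mem_biUnion.1 (h ha)
  rwa [P.eq_of_mem_parts hc (hS hd) ha had]

lemma disjoint_biUnion_iff_notMem_of_subset_parts (P : Finpartition s) {S : Finset (Finset α)}
    (hS : S ⊆ P.parts) {c : Finset α} (hc : c ∈ P.parts) :
    Disjoint c (S.biUnion id) ↔ c ∉ S := by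
  refine ⟨fun h hcS => P.ne_empty hc (h.eq_bot_of_le (subset_biUnion_of_mem id hcS)), fun h => ?_⟩
  exact (disjoint_biUnion_right _ _ _).2 fun d hd =>
    P.disjoint hc (hS hd) fun hcd => h (hcd ▸ hd)

lemma biUnion_filter_parts_subset (P : Finpartition s) {A : Finset α} (hAs : A ⊆ s)
    (hA : ∀ c ∈ P.parts, c ⊆ A ∨ Disjoint c A) : {c ∈ P.parts | c ⊆ A}.biUnion id = A := by
  refine subset_antisymm (biUnion_subset.2 fun c hc => (mem_filter.1 hc).2) fun a ha => ?_
  obtain ⟨c, hc, hac⟩ := P.exists_mem (hAs ha)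
  have hcA : c ⊆ A := (hA c hc).resolve_right fun h => disjoint_left.1 h hac ha
  exact mem_biUnion.2 ⟨c, mem_filter.2 ⟨hc, hcA⟩, hac⟩

lemma prod_parts_add [CommSemiring R] (P : Finpartition s) (f g : Finset α → R) :
    ∏ c ∈ P.parts, (f c + g c) =
      ∑ A ∈ s.powerset with ∀ c ∈ P.parts, c ⊆ A ∨ Disjoint c A,
        (∏ c ∈ P.parts with c ⊆ A, f c) * ∏ c ∈ P.parts with Disjoint c A, g c := by
  have filter_subset_biUnion {S} (hS : S ⊆ P.parts) : {c ∈ P.parts | c ⊆ S.biUnion id} = S := by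
    rw [filter_congr fun c hc => subset_biUnion_iff_mem_of_subset_parts P hS hc,
      filter_mem_eq_inter, inter_eq_right.2 hS]
  have filter_disjoint_biUnion {S} (hS : S ⊆ P.parts) :
      {c ∈ P.parts | Disjoint c (S.biUnion id)} = P.parts \ S := by
    rw [filter_congr fun c hc => disjoint_biUnion_iff_notMem_of_subset_parts P hS hc,
      filter_notMem_eq_sdiff]
  rw [prod_add]
  refine sum_bij' (fun S _ => S.biUnion id) (fun A _ => {c ∈ P.parts | c ⊆ A}) ?_ ?_ ?_ ?_ ?_
  · intro S hS
    rw [mem_powerset] at hS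
    refine mem_filter.2 ⟨mem_powerset.2 (biUnion_subset.2 fun c hc => P.le (hS hc)), fun c hc => ?_⟩
    rw [subset_biUnion_iff_mem_of_subset_parts P hS hc,
      disjoint_biUnion_iff_notMem_of_subset_parts P hS hc]
    exact em _
  · exact fun A _ => mem_powerset.2 (filter_subset _ _)
  · exact fun S hS => filter_subset_biUnion (mem_powerset.1 hS)
  · intro A hA
    obtain ⟨hAs, hA⟩ := mem_filter.1 hA
    exact biUnion_filter_parts_subset P (mem_powerset.1 hAs) hA
  · intro S hS
    rw [mem_powerset] at hS
    rw [filter_subset_biUnion hS, filter_disjoint_biUnion hS]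

end Finpartition

section SameCycle

variable {α β : Type*} {σ : Perm α}

lemma semiconj_zpow {τ : Perm β} {e : β → α} (h : Function.Semiconj e τ σ) :
    ∀ k : ℤ, Function.Semiconj e ⇑(τ ^ k) ⇑(σ ^ k)
  | (n : ℕ) => by
    simpa only [zpow_natCast, Perm.coe_pow] using h.iterate_right n
  | Int.negSucc n => by
    have hn : Function.Semiconj e ⇑(τ ^ (n + 1)) ⇑(σ ^ (n + 1)) := by
      simpa only [Perm.coe_pow] using h.iterate_right (n + 1)
    exact hn.inverses_right (τ ^ (n + 1)).right_inv (σ ^ (n + 1)).left_inv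

lemma sameCycle_apply_iff_of_semiconj {τ : Perm β} {e : β → α} (h : Function.Semiconj e τ σ)
    {b : β} {a : α} : σ.SameCycle (e b) a ↔ ∃ b', τ.SameCycle b b' ∧ e b' = a := by
  constructor
  · rintro ⟨k, rfl⟩
    exact ⟨(τ ^ k) b, ⟨k, rfl⟩, semiconj_zpow h k b⟩
  · rintro ⟨_, ⟨k, rfl⟩, rfl⟩
    exact ⟨k, (semiconj_zpow h k b).symm⟩

lemma iff_of_sameCycle {p : α → Prop} (hp : ∀ a, p (σ a) ↔ p a) {a b : α}
    (hab : σ.SameCycle a b) : p a ↔ p b := by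
  have of_sameCycle {a b : α} (hab : σ.SameCycle a b) (ha : p a) : p b := by
    have hsub : Function.Semiconj Subtype.val (σ.subtypePerm hp) σ := fun _ => rfl
    obtain ⟨b', -, rfl⟩ := (sameCycle_apply_iff_of_semiconj hsub (b := ⟨a, ha⟩)).1 hab
    exact b'.2
  exact ⟨of_sameCycle hab, of_sameCycle hab.symm⟩

end SameCycle

section CyclePartition

variable {α β : Type*} [Fintype α] [DecidableEq α] [Fintype β] [DecidableEq β]

/-- The partition of `α` into the cycles of `σ`, fixed points being singleton cycles (unlike in
`Equiv.Perm.cycleFactorsFinset`, which omits them). -/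
def cyclePartition (σ : Perm α) : Finpartition (univ : Finset α) :=
  haveI : DecidableRel (Perm.SameCycle.setoid σ) := inferInstanceAs (DecidableRel σ.SameCycle)
  .ofSetoid (Perm.SameCycle.setoid σ)

lemma mem_parts_cyclePartition {σ : Perm α} {c : Finset α} :
    c ∈ (cyclePartition σ).parts ↔ ∃ a, ({b | σ.SameCycle a b} : Finset α) = c := by
  simp only [cyclePartition, Finpartition.ofSetoid, Finpartition.ofSetSetoid, mem_image, mem_univ,
    true_and]
  rfl

lemma orbitsFinset_eq_parts_cyclePartition {n : ℕ} (σ : Perm (Fin n)) :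
    orbitsFinset σ = (cyclePartition σ).parts :=
  rfl

lemma forall_parts_cyclePartition_iff {σ : Perm α} {A : Finset α} :
    (∀ c ∈ (cyclePartition σ).parts, c ⊆ A ∨ Disjoint c A) ↔ ∀ a, σ a ∈ A ↔ a ∈ A := by
  constructor
  · intro h a
    have ha : a ∈ ({b | σ.SameCycle a b} : Finset α) := by simp [Perm.SameCycle.refl]
    have hσa : σ a ∈ ({b | σ.SameCycle a b} : Finset α) := by simp [Perm.SameCycle.refl]
    rcases h _ (mem_parts_cyclePartition.2 ⟨a, rfl⟩) with hsub | hdisj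
    · exact iff_of_true (hsub hσa) (hsub ha)
    · exact iff_of_false (disjoint_left.1 hdisj hσa) (disjoint_left.1 hdisj ha)
  · intro hA c hc
    obtain ⟨a, rfl⟩ := mem_parts_cyclePartition.1 hc
    have mem_iff : ∀ b ∈ ({b | σ.SameCycle a b} : Finset α), a ∈ A ↔ b ∈ A := fun b hb =>
      iff_of_sameCycle hA (mem_filter.1 hb).2
    by_cases ha : a ∈ A
    · exact .inl fun b hb => (mem_iff b hb).1 ha
    · exact .inr (disjoint_left.2 fun b hb hbA => ha ((mem_iff b hb).2 hbA))

lemma image_map_parts_cyclePartition {σ : Perm α} {τ : Perm β} {e : β ↪ α}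
    (h : Function.Semiconj e τ σ) :
    (cyclePartition τ).parts.image (·.map e) =
      {c ∈ (cyclePartition σ).parts | c ⊆ univ.map e} := by
  have map_cycle (b : β) :
      ({b' | τ.SameCycle b b'} : Finset β).map e = ({a | σ.SameCycle (e b) a} : Finset α) := by
    ext a
    simp [sameCycle_apply_iff_of_semiconj h]
  ext c
  simp only [mem_image, mem_filter, mem_parts_cyclePartition]
  constructor
  · rintro ⟨_, ⟨b, rfl⟩, rfl⟩
    exact ⟨⟨e b, (map_cycle b).symm⟩, map_subset_map.2 (subset_univ _)⟩
  · rintro ⟨⟨a, rfl⟩, hc⟩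
    obtain ⟨b, -, rfl⟩ := mem_map.1 (hc (by simp [Perm.SameCycle.refl] : a ∈ _))
    exact ⟨_, ⟨b, rfl⟩, map_cycle b⟩

end CyclePartition

section CycleWeight

variable {α β R : Type*} [Fintype α] [DecidableEq α] [Fintype β] [DecidableEq β] [CommSemiring R]

/-- The multiplicative class function on permutations with value `f ℓ` on cycles of length `ℓ`. -/
def cycleWeight (f : ℕ → R) (σ : Perm α) : R :=
  ∏ c ∈ (cyclePartition σ).parts, f #c

lemma cycleWeight_congr {f g : ℕ → R} (h : ∀ k ∈ Icc 1 (Fintype.card α), f k = g k)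
    (σ : Perm α) : cycleWeight f σ = cycleWeight g σ :=
  prod_congr rfl fun c hc =>
    h #c (mem_Icc.2 ⟨((cyclePartition σ).nonempty_of_mem_parts hc).card_pos, card_le_univ c⟩)

lemma cycleWeight_one (σ : Perm α) : cycleWeight (1 : ℕ → R) σ = 1 :=
  prod_const_one

lemma cycleWeight_pow_mul (x : R) (f : ℕ → R) (σ : Perm α) :
    cycleWeight (fun k => x ^ k * f k) σ = x ^ Fintype.card α * cycleWeight f σ := by
  rw [cycleWeight, prod_mul_distrib, prod_pow_eq_pow_sum, Finpartition.sum_card_parts, card_univ,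
    cycleWeight]

lemma cycleWeight_of_semiconj (f : ℕ → R) {σ : Perm α} {τ : Perm β} {e : β ↪ α}
    (h : Function.Semiconj e τ σ) :
    cycleWeight f τ = ∏ c ∈ (cyclePartition σ).parts with c ⊆ univ.map e, f #c := by
  rw [← image_map_parts_cyclePartition h, prod_image (map_injective e).injOn]
  simp only [card_map, cycleWeight]

lemma cycleWeight_permCongr (f : ℕ → R) (e : β ≃ α) (τ : Perm β) :
    cycleWeight f (e.permCongr τ) = cycleWeight f τ := by
  have h : Function.Semiconj e.toEmbedding τ (e.permCongr τ) := fun b => by simp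
  rw [cycleWeight_of_semiconj f h]
  simp [cycleWeight]

lemma cycleWeight_add (f g : ℕ → R) (σ : Perm α) :
    cycleWeight (f + g) σ =
      ∑ A : Finset α with ∀ a, σ a ∈ A ↔ a ∈ A,
        (∏ c ∈ (cyclePartition σ).parts with c ⊆ A, f #c) *
          ∏ c ∈ (cyclePartition σ).parts with Disjoint c A, g #c := by
  simp only [cycleWeight, Pi.add_apply, prod_parts_add, powerset_univ,
    forall_parts_cyclePartition_iff]

variable (A : Finset α) (τ : Perm {a // a ∈ A}) (ρ : Perm {a // a ∉ A})

lemma prod_parts_subset_subtypeCongr (f : ℕ → R) :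
    ∏ c ∈ (cyclePartition (Perm.subtypeCongr τ ρ)).parts with c ⊆ A, f #c = cycleWeight f τ := by
  have h : Function.Semiconj (Function.Embedding.subtype (· ∈ A)) τ (Perm.subtypeCongr τ ρ) :=
    fun a => (Perm.subtypeCongr.left_apply_subtype τ ρ a).symm
  rw [cycleWeight_of_semiconj f h]
  simp [subset_iff]

lemma prod_parts_disjoint_subtypeCongr (f : ℕ → R) :
    ∏ c ∈ (cyclePartition (Perm.subtypeCongr τ ρ)).parts with Disjoint c A, f #c =
      cycleWeight f ρ := by
  have h : Function.Semiconj (Function.Embedding.subtype (· ∉ A)) ρ (Perm.subtypeCongr τ ρ) :=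
    fun a => (Perm.subtypeCongr.right_apply_subtype τ ρ a).symm
  rw [cycleWeight_of_semiconj f h]
  simp [subset_iff, disjoint_left]

end CycleWeight

section CycleSum

variable {α β R : Type*} [Fintype α] [DecidableEq α] [Fintype β] [DecidableEq β] [CommSemiring R]

lemma sum_perm_preserving {M : Type*} [AddCommMonoid M] (p : α → Prop) [DecidablePred p]
    [Fintype {a // p a}] [Fintype {a // ¬p a}] (F : Perm α → M) :
    ∑ σ : Perm α with ∀ a, p (σ a) ↔ p a, F σ =
      ∑ τ : Perm {a // p a}, ∑ ρ : Perm {a // ¬p a}, F (Perm.subtypeCongr τ ρ) := by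
  have subtypeCongr_subtypePerm (σ : Perm α) (hσ : ∀ a, p (σ a) ↔ p a) :
      Perm.subtypeCongr (σ.subtypePerm hσ) (σ.subtypePerm fun a => not_congr (hσ a)) = σ := by
    ext a
    by_cases ha : p a
    · simp [Perm.subtypeCongr.left_apply _ _ ha]
    · simp [Perm.subtypeCongr.right_apply _ _ ha]
  rw [← sum_product']
  refine sum_bij'
    (fun σ hσ => (σ.subtypePerm (mem_filter.1 hσ).2,
      σ.subtypePerm fun a => not_congr ((mem_filter.1 hσ).2 a)))
    (fun τ _ => Perm.subtypeCongr τ.1 τ.2) ?_ ?_ ?_ ?_ ?_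
  · simp
  · rintro ⟨τ, ρ⟩ -
    refine mem_filter.2 ⟨mem_univ _, fun a => ?_⟩
    by_cases ha : p a
    · simp [Perm.subtypeCongr.left_apply _ _ ha, ha, (τ ⟨a, ha⟩).2]
    · simp [Perm.subtypeCongr.right_apply _ _ ha, ha, (ρ ⟨a, ha⟩).2]
  · exact fun σ hσ => subtypeCongr_subtypePerm σ (mem_filter.1 hσ).2
  · rintro ⟨τ, ρ⟩ -
    ext <;> simp
  · exact fun σ hσ => congrArg F (subtypeCongr_subtypePerm σ (mem_filter.1 hσ).2).symm

variable (α) in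
/-- `|α|!` times the cycle index of the symmetric group on `α`, evaluated by substituting `f ℓ` for
the variable of cycles of length `ℓ`. -/
def cycleSum (f : ℕ → R) : R :=
  ∑ σ : Perm α, cycleWeight f σ

lemma cycleSum_of_equiv (f : ℕ → R) (e : α ≃ β) : cycleSum α f = cycleSum β f :=
  Fintype.sum_equiv e.permCongr _ _ fun σ => (cycleWeight_permCongr f e σ).symm

lemma cycleSum_congr {f g : ℕ → R} (h : ∀ k ∈ Icc 1 (Fintype.card α), f k = g k) :
    cycleSum α f = cycleSum α g :=
  sum_congr rfl fun σ _ => cycleWeight_congr h σ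

lemma cycleSum_one : cycleSum α (1 : ℕ → R) = (Fintype.card α).factorial := by
  simp [cycleSum, cycleWeight_one, Fintype.card_perm]

lemma cycleSum_pow_mul (x : R) (f : ℕ → R) :
    cycleSum α (fun k => x ^ k * f k) = x ^ Fintype.card α * cycleSum α f := by
  simp only [cycleSum, cycleWeight_pow_mul, mul_sum]

lemma cycleSum_add (f g : ℕ → R) :
    cycleSum α (f + g) =
      ∑ A : Finset α, cycleSum {a // a ∈ A} f * cycleSum {a // a ∉ A} g := by
  simp only [cycleSum, cycleWeight_add, sum_filter, sum_mul_sum]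
  rw [sum_comm]
  refine sum_congr rfl fun A _ => ?_
  rw [← sum_filter, sum_perm_preserving (· ∈ A)]
  simp only [prod_parts_subset_subtypeCongr, prod_parts_disjoint_subtypeCongr]

lemma cycleSum_fin_add (f g : ℕ → R) (n : ℕ) :
    cycleSum (Fin n) (f + g) =
      ∑ i ∈ range (n + 1), n.choose i * (cycleSum (Fin i) f * cycleSum (Fin (n - i)) g) := by
  have hcompl (A : Finset (Fin n)) : Fintype.card {a // a ∉ A} = n - #A := by
    simp [Fintype.card_subtype_compl]
  simp only [cycleSum_add, cycleSum_of_equiv f (equivFin _),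
    cycleSum_of_equiv g (Fintype.equivFinOfCardEq (hcompl _))]
  rw [← powerset_univ,
    sum_powerset_apply_card fun i => cycleSum (Fin i) f * cycleSum (Fin (n - i)) g, card_fin]
  simp only [nsmul_eq_mul]

end CycleSum

section Geometric

lemma succ_choose_mul_factorial {n i : ℕ} (hi : i ≤ n) :
    (n + 1).choose i * (n + 1 - i).factorial = (n + 1) * (n.choose i * (n - i).factorial) := by
  have h := Nat.choose_mul_succ_eq n i
  rw [Nat.sub_add_comm hi] at h ⊢
  rw [Nat.factorial_succ, ← mul_assoc, ← h]
  ring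

variable {K : Type*} [Field K] {x : K} {n : ℕ}

lemma inv_one_sub_eq_mul_add_one {y : K} (hy : y ≠ 1) : (1 - y)⁻¹ = y * (1 - y)⁻¹ + 1 := by
  have : 1 - y ≠ 0 := sub_ne_zero.2 hy.symm
  field_simp
  ring

lemma cycleSum_inv_one_sub_pow (hx : ∀ k ∈ Icc 1 n, x ^ k ≠ 1) :
    cycleSum (Fin n) (fun k => (1 - x ^ k)⁻¹) =
      ∑ i ∈ range (n + 1), n.choose i * (n - i).factorial *
        (x ^ i * cycleSum (Fin i) fun k => (1 - x ^ k)⁻¹) := by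
  calc cycleSum (Fin n) (fun k => (1 - x ^ k)⁻¹)
    _ = cycleSum (Fin n) ((fun k => x ^ k * (1 - x ^ k)⁻¹) + 1) :=
      cycleSum_congr fun k hk => inv_one_sub_eq_mul_add_one (hx k (by simpa using hk))
    _ = _ := by
      rw [cycleSum_fin_add]
      refine sum_congr rfl fun i _ => ?_
      rw [cycleSum_pow_mul, cycleSum_one, Fintype.card_fin, Fintype.card_fin]
      ring

lemma one_sub_pow_mul_cycleSum_succ (hx : ∀ k ∈ Icc 1 (n + 1), x ^ k ≠ 1) :
    (1 - x ^ (n + 1)) * cycleSum (Fin (n + 1)) (fun k => (1 - x ^ k)⁻¹) =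
      (n + 1) * cycleSum (Fin n) fun k => (1 - x ^ k)⁻¹ := by
  have hxn : ∀ k ∈ Icc 1 n, x ^ k ≠ 1 := fun k hk => hx k (Icc_subset_Icc_right n.le_succ hk)
  have initial_terms : ∑ i ∈ range (n + 1), (n + 1).choose i * (n + 1 - i).factorial *
      (x ^ i * cycleSum (Fin i) fun k => (1 - x ^ k)⁻¹) =
        (n + 1) * cycleSum (Fin n) fun k => (1 - x ^ k)⁻¹ := by
    rw [cycleSum_inv_one_sub_pow hxn, mul_sum]
    refine sum_congr rfl fun i hi => ?_
    have hcoeff := congrArg (Nat.cast (R := K))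
      (succ_choose_mul_factorial (mem_range_succ_iff.1 hi))
    push_cast at hcoeff
    rw [hcoeff, mul_assoc]
  have hsucc := cycleSum_inv_one_sub_pow hx
  rw [sum_range_succ, initial_terms, Nat.choose_self, Nat.sub_self, Nat.factorial_zero,
    Nat.cast_one] at hsucc
  linear_combination hsucc

lemma cycleSum_inv_one_sub_pow_eq_prod (hx : ∀ k ∈ Icc 1 n, x ^ k ≠ 1) :
    cycleSum (Fin n) (fun k => (1 - x ^ k)⁻¹) =
      n.factorial * ∏ k ∈ Icc 1 n, (1 - x ^ k)⁻¹ := by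
  induction n with
  | zero =>
    have hone : cycleSum (Fin 0) (fun k => (1 - x ^ k)⁻¹) = cycleSum (Fin 0) 1 :=
      cycleSum_congr (by simp)
    simp [hone, cycleSum_one]
  | succ n ih =>
    have hne : 1 - x ^ (n + 1) ≠ 0 := sub_ne_zero.2 (hx _ (by simp)).symm
    have hn := ih fun k hk => hx k (Icc_subset_Icc_right n.le_succ hk)
    calc cycleSum (Fin (n + 1)) (fun k => (1 - x ^ k)⁻¹)
      _ = (n + 1) * (n.factorial * ∏ k ∈ Icc 1 n, (1 - x ^ k)⁻¹) * (1 - x ^ (n + 1))⁻¹ := by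
        rw [eq_mul_inv_iff_mul_eq₀ hne, mul_comm, one_sub_pow_mul_cycleSum_succ hx, hn]
      _ = (n + 1).factorial * ∏ k ∈ Icc 1 (n + 1), (1 - x ^ k)⁻¹ := by
        rw [prod_Icc_succ_top (Nat.le_add_left 1 n), Nat.factorial_succ]
        push_cast
        ring

end Geometric

theorem stmt13_general {K : Type*} [Field K] {n : ℕ} (x : K) (hx : ∀ k ∈ Icc 1 n, x ^ k ≠ 1) :
    ∑ σ : Perm (Fin n), (1 - x) ^ n * ∏ c ∈ orbitsFinset σ, (1 - x ^ #c)⁻¹ =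
      n.factorial * ∏ k ∈ Icc 1 n, (1 - x) / (1 - x ^ k) := by
  calc ∑ σ : Perm (Fin n), (1 - x) ^ n * ∏ c ∈ orbitsFinset σ, (1 - x ^ #c)⁻¹
    _ = (1 - x) ^ n * cycleSum (Fin n) fun k => (1 - x ^ k)⁻¹ := by
      simp only [orbitsFinset_eq_parts_cyclePartition, cycleSum, cycleWeight, mul_sum]
    _ = n.factorial * ∏ k ∈ Icc 1 n, (1 - x) / (1 - x ^ k) := by
      rw [cycleSum_inv_one_sub_pow_eq_prod hx]
      simp only [div_eq_mul_inv, prod_mul_distrib, prod_const, Nat.card_Icc, Nat.add_sub_cancel]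
      ring

/-- The probability that `n` harmonic oscillators in thermal states of Boltzmann factor
`x ∈ [0,1)` occupy the fully symmetric partition `λ = (n)`:
`(1/n!) Σ_σ k_x(σ) = ∏_{k=1}^n (1−x)/(1−x^k)`. -/
theorem stmt13 {n : ℕ} (hn : 1 ≤ n) (x : ℝ) (h0 : 0 ≤ x) (h1 : x < 1) :
    (1 / (n.factorial : ℝ)) *
        ∑ σ : Equiv.Perm (Fin n), (1 - x) ^ n * ∏ c ∈ orbitsFinset σ, (1 - x ^ c.card)⁻¹ =
      ∏ k ∈ Finset.Icc 1 n, (1 - x) / (1 - x ^ k) := by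
  have hx : ∀ k ∈ Icc 1 n, x ^ k ≠ 1 := fun k hk =>
    (pow_lt_one₀ h0 h1 (Nat.one_le_iff_ne_zero.1 (mem_Icc.1 hk).1)).ne
  rw [stmt13_general x hx, one_div, inv_mul_cancel_left₀ (Nat.cast_ne_zero.2 n.factorial_ne_zero)]
end
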